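/- Let L be a connected complex reductive group and U₁ ≠ 0, U₂ ≠ 0, U₃ finite-dimensional rational L-modules. Suppose that a Borel subgroup of L × (ℂ*)², acting on (U₁ ⊗ U₂) ⊕ U₃ with the two ℂ*-factors acting by scalars on U₁⊗U₂ and on U₃ respectively, has a dense orbit. Then a Borel subgroup of L × (ℂ*)³, acting on U₁ ⊕ U₂ ⊕ U₃ with the three ℂ*-factors acting by scalars on U₁, U₂ and U₃ respectively, has a dense orbit. -/

import Mathlib

/-- A Zariski-closed subset of the space of `N×N` complex matrices. -/
def ZClosedMat {N : ℕ} (s : Set (Matrix (Fin N) (Fin N) ℂ)) : Prop :=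
  ∃ I : Set (MvPolynomial (Fin N × Fin N) ℂ),
    s = {A | ∀ p ∈ I, MvPolynomial.eval (fun ij => A ij.1 ij.2) p = 0}

/-- A (Zariski-closed) linear algebraic group of `N×N` complex matrices. -/
structure LinAlgGroup (N : ℕ) where
  carrier : Set (Matrix (Fin N) (Fin N) ℂ)
  one_mem : 1 ∈ carrier
  mul_mem : ∀ A ∈ carrier, ∀ B ∈ carrier, A * B ∈ carrier
  unit : ∀ A ∈ carrier, IsUnit A
  inv_mem : ∀ A ∈ carrier, A⁻¹ ∈ carrier
  closed : ZClosedMat carrier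

/-- Connectedness (= Zariski irreducibility) of a linear algebraic group. -/
def IsZConnected {N : ℕ} (G : LinAlgGroup N) : Prop :=
  ∀ p q : MvPolynomial (Fin N × Fin N) ℂ,
    (∀ A ∈ G.carrier, MvPolynomial.eval (fun ij => A ij.1 ij.2) p *
        MvPolynomial.eval (fun ij => A ij.1 ij.2) q = 0) →
    (∀ A ∈ G.carrier, MvPolynomial.eval (fun ij => A ij.1 ij.2) p = 0) ∨
    (∀ A ∈ G.carrier, MvPolynomial.eval (fun ij => A ij.1 ij.2) q = 0)

/-- Iterated commutator sets: depth-`n` values of the iterated commutator word. -/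
def commSet {M : Type*} [Monoid M] [Inv M] : ℕ → Set M → Set M
  | 0, s => s
  | (k + 1), s =>
      {m | ∃ a ∈ commSet k s, ∃ b ∈ commSet k s, m = a * b * a⁻¹ * b⁻¹}

/-- Solvability of a matrix group: some iterated commutator set is trivial. -/
def IsSolvSet {M : Type*} [Monoid M] [Inv M] (s : Set M) : Prop :=
  ∃ n : ℕ, commSet n s ⊆ {1}

/-- `B` is a Borel subgroup of `G`: a maximal closed connected solvable subgroup. -/
def IsBorel {N : ℕ} (G B : LinAlgGroup N) : Prop :=
  B.carrier ⊆ G.carrier ∧ IsZConnected B ∧ IsSolvSet B.carrier ∧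
  ∀ B' : LinAlgGroup N, B'.carrier ⊆ G.carrier → IsZConnected B' →
    IsSolvSet B'.carrier → B.carrier ⊆ B'.carrier → B'.carrier = B.carrier

/-- `G` is reductive: it has no nontrivial closed connected normal unipotent subgroup. -/
def IsReductive {N : ℕ} (G : LinAlgGroup N) : Prop :=
  ∀ H : LinAlgGroup N, H.carrier ⊆ G.carrier →
    (∀ g ∈ G.carrier, ∀ h ∈ H.carrier, g * h * g⁻¹ ∈ H.carrier) →
    IsZConnected H →
    (∀ A ∈ H.carrier, (A - 1) ^ N = 0) →
    H.carrier = {1}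

/-- A rational (finite-dimensional) representation of `G` on `ℂᵈ`: a homomorphism whose
matrix coefficients are regular functions on `G` (polynomials in the entries and `det⁻¹`). -/
structure RationalRep {N : ℕ} (G : LinAlgGroup N) (d : ℕ) where
  ρ : Matrix (Fin N) (Fin N) ℂ → Matrix (Fin d) (Fin d) ℂ
  map_one : ρ 1 = 1
  map_mul : ∀ A ∈ G.carrier, ∀ B ∈ G.carrier, ρ (A * B) = ρ A * ρ B
  unit : ∀ A ∈ G.carrier, IsUnit (ρ A)
  rational : ∀ i j : Fin d, ∃ (k : ℕ) (p : MvPolynomial (Fin N × Fin N) ℂ),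
    ∀ A ∈ G.carrier, ρ A i j * A.det ^ k =
      MvPolynomial.eval (fun ij => A ij.1 ij.2) p

/-- Zariski density of a subset of a complex vector space `ι → ℂ`. -/
def ZDense {ι : Type*} (s : Set (ι → ℂ)) : Prop :=
  ∀ p : MvPolynomial ι ℂ, (∀ x ∈ s, MvPolynomial.eval x p = 0) → p = 0

/-! Abstract Lie–Kolchin for Zariski-irreducible sets in a group with an algebra of functions. -/

/-- Irreducibility of a subset w.r.t. an algebra of functions. -/
def RIrred {G : Type*} (R : Subalgebra ℂ (G → ℂ)) (S : Set G) : Prop :=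
  ∀ f ∈ R, ∀ g ∈ R, (∀ x ∈ S, f x * g x = 0) → (∀ x ∈ S, f x = 0) ∨ (∀ x ∈ S, g x = 0)

theorem RIrred.const {G : Type*} {R : Subalgebra ℂ (G → ℂ)} {S : Set G} (hS : RIrred R S)
    (l : G → ℂ) (hl : l ∈ R) (o : G) (ho : o ∈ S) (F : Finset ℂ) :
    (∀ x ∈ S, l x ∈ F) → ∀ x ∈ S, l x = l o := by
  classical
  induction F using Finset.induction_on with
  | empty => intro h; simpa using h o ho
  | insert c F hc ih =>
    intro h
    have h1 : (l - fun _ => c) ∈ R := R.sub_mem hl (R.algebraMap_mem c)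
    have h2 : (∏ c' ∈ F, (l - fun _ => c')) ∈ R :=
      R.prod_mem fun c' _ => R.sub_mem hl (R.algebraMap_mem c')
    rcases hS _ h1 _ h2 (by
      intro x hx
      rcases Finset.mem_insert.1 (h x hx) with h' | h'
      · simp [h']
      · rw [Finset.prod_apply, Finset.prod_eq_zero h' (by simp), mul_zero]) with h3 | h3
    · intro x hx
      have a := h3 x hx
      have b := h3 o ho
      simp only [Pi.sub_apply, sub_eq_zero] at a b
      rw [a, b]
    · refine ih fun x hx => ?_
      have a := h3 x hx
      rw [Finset.prod_apply, Finset.prod_eq_zero_iff] at a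
      obtain ⟨c', hc', e⟩ := a
      simp only [Pi.sub_apply, sub_eq_zero] at e
      rwa [e]

theorem RIrred.comm {G : Type*} [Group G] {R : Subalgebra ℂ (G → ℂ)}
    (hc : ∀ f ∈ R, ∀ c : G, (fun g => f (g * c * g⁻¹)) ∈ R)
    (hl : ∀ f ∈ R, ∀ c : G, (fun g => f (c * g)) ∈ R)
    (hr : ∀ f ∈ R, ∀ c : G, (fun g => f (g * c)) ∈ R)
    {S : Set G} (hS : RIrred R S) :
    RIrred R {m | ∃ a ∈ S, ∃ b ∈ S, m = a * b * a⁻¹ * b⁻¹} := by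
  intro f hf g hg h
  have hb : ∀ f ∈ R, ∀ a : G, (fun b => f (a * b * a⁻¹ * b⁻¹)) ∈ R := by
    intro f hf a
    have := hc _ (hl f hf a) a⁻¹
    simpa [mul_assoc] using this
  have ha : ∀ f ∈ R, ∀ b : G, (fun a => f (a * b * a⁻¹ * b⁻¹)) ∈ R := by
    intro f hf b
    exact hc _ (hr f hf b⁻¹) b
  have key : ∀ a ∈ S, (∀ b ∈ S, f (a * b * a⁻¹ * b⁻¹) = 0) ∨
      (∀ b ∈ S, g (a * b * a⁻¹ * b⁻¹) = 0) := fun a ha' =>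
    hS _ (hb f hf a) _ (hb g hg a) fun b hb' => h _ ⟨a, ha', b, hb', rfl⟩
  by_cases h1 : ∀ a ∈ S, ∀ b ∈ S, f (a * b * a⁻¹ * b⁻¹) = 0
  · left; rintro _ ⟨a, ha', b, hb', rfl⟩; exact h1 a ha' b hb'
  right
  push Not at h1
  obtain ⟨a0, ha0, b0, hb0, hne⟩ := h1
  rintro _ ⟨a, ha', b, hb', rfl⟩
  rcases hS _ (ha f hf b0) _ (ha g hg b) (by
    intro a ha'
    rcases key a ha' with h' | h'
    · simp [h' b0 hb0]
    · simp [h' b hb']) with h' | h'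
  · exact absurd (h' a0 ha0) hne
  · exact h' a ha'

/-- Commuting families of operators have a common eigenvector. -/
theorem exists_common_eigen {V : Type*} [AddCommGroup V] [Module ℂ V] [FiniteDimensional ℂ V]
    (T : Set (Module.End ℂ V)) :
    ∀ (n : ℕ) (W : Submodule ℂ V), Module.finrank ℂ W = n → W ≠ ⊥ →
      (∀ a ∈ T, ∀ v ∈ W, a v ∈ W) →
      (∀ a ∈ T, ∀ b ∈ T, ∀ v ∈ W, a (b v) = b (a v)) →
      ∃ v ∈ W, v ≠ 0 ∧ ∀ a ∈ T, ∃ c : ℂ, a v = c • v := by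
  intro n
  induction n using Nat.strong_induction_on with
  | _ n ih =>
  intro W hn hW hinv hcomm
  by_cases hsc : ∀ a ∈ T, ∃ c : ℂ, ∀ v ∈ W, a v = c • v
  · obtain ⟨v, hv, hv0⟩ := Submodule.exists_mem_ne_zero_of_ne_bot hW
    exact ⟨v, hv, hv0, fun a ha => (hsc a ha).imp fun c hc => hc v hv⟩
  push Not at hsc
  obtain ⟨a, ha, hac⟩ := hsc
  have : Nontrivial W := Submodule.nontrivial_iff_ne_bot.2 hW
  obtain ⟨c, hc⟩ := Module.End.exists_eigenvalue (a.restrict (hinv a ha))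
  obtain ⟨v, hv⟩ := hc.exists_hasEigenvector
  have hv1 : a v = c • (v : V) := congrArg Subtype.val hv.apply_eq_smul
  let W' : Submodule ℂ V := W ⊓ Module.End.eigenspace a c
  have hlt : W' < W := by
    refine lt_of_le_of_ne inf_le_left fun h => ?_
    obtain ⟨x, hx, hx'⟩ := hac c
    rw [← h] at hx
    exact hx' (Module.End.mem_eigenspace_iff.1 hx.2)
  obtain ⟨x, hx, h0, h1⟩ := ih _ (hn ▸ Submodule.finrank_lt_finrank_of_lt hlt) W' rfl
    (by
      refine Submodule.ne_bot_iff _ |>.2 ⟨v, ⟨v.2, Module.End.mem_eigenspace_iff.2 hv1⟩, ?_⟩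
      simpa using hv.2)
    (by
      rintro b hb x ⟨hx, hx'⟩
      refine ⟨hinv b hb x hx, Module.End.mem_eigenspace_iff.2 ?_⟩
      rw [hcomm a ha b hb x hx, Module.End.mem_eigenspace_iff.1 hx', map_smul])
    (fun a ha b hb v hv => hcomm a ha b hb v hv.1)
  exact ⟨x, hx.1, h0, h1⟩

theorem commSet_one_mem {G : Type*} [Group G] (k : ℕ) :
    (1 : G) ∈ commSet k (Set.univ : Set G) := by
  induction k with
  | zero => trivial
  | succ k ih => exact ⟨1, ih, 1, ih, by simp⟩

theorem commSet_conj_mem {G : Type*} [Group G] (k : ℕ) (g : G) :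
    ∀ s ∈ commSet k (Set.univ : Set G), g * s * g⁻¹ ∈ commSet k (Set.univ : Set G) := by
  induction k with
  | zero => intro _ _; trivial
  | succ k ih =>
    rintro _ ⟨a, ha, b, hb, rfl⟩
    exact ⟨_, ih a ha, _, ih b hb, by group⟩

theorem lieKolchin {G : Type*} [Group G] {R : Subalgebra ℂ (G → ℂ)}
    (hc : ∀ f ∈ R, ∀ c : G, (fun g => f (g * c * g⁻¹)) ∈ R)
    (hl : ∀ f ∈ R, ∀ c : G, (fun g => f (c * g)) ∈ R)
    (hr : ∀ f ∈ R, ∀ c : G, (fun g => f (g * c)) ∈ R)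
    (hi : ∀ f ∈ R, (fun g => f g⁻¹) ∈ R)
    (hirr : RIrred R Set.univ) (n : ℕ) (hn : commSet n (Set.univ : Set G) ⊆ {1})
    {d : ℕ} (hd : 0 < d) (σ : G →* Module.End ℂ (Fin d → ℂ))
    (hσ : ∀ v i, (fun g => σ g v i) ∈ R) :
    ∃ v : Fin d → ℂ, v ≠ 0 ∧ ∀ g, ∃ c : ℂ, σ g v = c • v := by
  have hirrk : ∀ k, RIrred R (commSet k (Set.univ : Set G)) := by
    intro k
    induction k with
    | zero => exact hirr
    | succ k ih => exact RIrred.comm hc hl hr ih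
  have hmul : ∀ (a b : G) v, σ (a * b) v = σ a (σ b v) := fun a b v => by
    rw [map_mul]; rfl
  have hone : ∀ v, σ 1 v = v := fun v => by rw [map_one]; rfl
  have hfin : ∀ s : G, ∃ F : Finset ℂ, ∀ c : ℂ, ∀ v, v ≠ 0 → σ s v = c • v → c ∈ F := by
    intro s
    have := Module.End.finite_hasEigenvalue (σ s)
    refine ⟨this.toFinset, fun c v hv h => ?_⟩
    rw [Set.Finite.mem_toFinset]
    exact Module.End.hasEigenvalue_of_hasEigenvector
      ⟨Module.End.mem_eigenspace_iff.2 h, hv⟩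
  -- regular scalar functions with finitely many values are constant
  have hscal : ∀ k (φ : G → G), (∀ f ∈ R, (fun g => f (φ g)) ∈ R) → ∀ v, v ≠ 0 →
      ∀ l : G → ℂ, (∀ g ∈ commSet k Set.univ, σ (φ g) v = l g • v) →
      ∀ F : Finset ℂ, (∀ g ∈ commSet k Set.univ, l g ∈ F) →
      ∀ g ∈ commSet k Set.univ, l g = l 1 := by
    intro k φ hφ v hv l hlv F hF g hg
    obtain ⟨i, hi0⟩ := Function.ne_iff.1 hv
    have hm : (fun g => (v i)⁻¹ * σ (φ g) v i) ∈ R :=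
      R.mul_mem (R.algebraMap_mem (v i)⁻¹) (hφ _ (hσ v i))
    have hi0' : v i ≠ 0 := hi0
    have he : ∀ g ∈ commSet k Set.univ, (v i)⁻¹ * σ (φ g) v i = l g := by
      intro g hg
      rw [hlv g hg]; simp; field_simp
    have := (hirrk k).const _ hm 1 (commSet_one_mem k) F (fun x hx => by
      simp only [he x hx]; exact hF x hx) g hg
    rwa [he g hg, he 1 (commSet_one_mem k)] at this
  have main : ∀ j ≤ n, ∃ v : Fin d → ℂ, v ≠ 0 ∧
      ∀ g ∈ commSet (n - j) (Set.univ : Set G), ∃ c : ℂ, σ g v = c • v := by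
    intro j
    induction j with
    | zero =>
      intro _
      refine ⟨fun _ => 1, fun h => one_ne_zero (congrFun h ⟨0, hd⟩), fun g hg => ⟨1, ?_⟩⟩
      have : g = 1 := hn hg
      rw [this, hone, one_smul]
    | succ j ih =>
      intro hj
      obtain ⟨v, hv, hχ⟩ := ih (by omega)
      obtain ⟨k, hk⟩ : ∃ k, n - (j + 1) = k := ⟨_, rfl⟩
      have hk1 : n - j = k + 1 := by omega
      rw [hk]
      rw [hk1] at hχ
      choose! χ hχ using hχ
      let W : Submodule ℂ (Fin d → ℂ) :=
        ⨅ s : commSet (k + 1) (Set.univ : Set G), Module.End.eigenspace (σ s) (χ s)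
      have hW : ∀ x, x ∈ W ↔ ∀ s ∈ commSet (k + 1) (Set.univ : Set G), σ s x = χ s • x := by
        intro x; simp [W, Submodule.mem_iInf]
      have hvW : v ∈ W := (hW v).2 hχ
      have hχconj : ∀ s ∈ commSet (k + 1) (Set.univ : Set G), ∀ g ∈ commSet k Set.univ,
          χ (g⁻¹ * s * g) = χ s := by
        intro s hs g hg
        obtain ⟨F, hF⟩ := hfin s
        have hs' : ∀ g : G, g⁻¹ * s * g ∈ commSet (k + 1) (Set.univ : Set G) := fun g => by
          simpa using commSet_conj_mem (k + 1) g⁻¹ s hs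
        have := hscal k (fun g => g⁻¹ * s * g) (fun f hf => by
            simpa using hi _ (hc f hf s)) v hv (fun g => χ (g⁻¹ * s * g))
          (fun g _ => hχ _ (hs' g)) F (fun g _ => by
            refine hF _ (σ g v) ?_ ?_
            · intro h
              apply hv
              rw [← hone v, ← inv_mul_cancel g, hmul, h, map_zero]
            · rw [← map_smul, ← hχ _ (hs' g), ← hmul, ← hmul]
              congr 2; group) g hg
        simpa using this
      have hWinv : ∀ g ∈ commSet k (Set.univ : Set G), ∀ x ∈ W, σ g x ∈ W := by
        intro g hg x hx
        rw [hW]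
        intro s hs
        have hs' : g⁻¹ * s * g ∈ commSet (k + 1) (Set.univ : Set G) := by
          simpa using commSet_conj_mem (k + 1) g⁻¹ s hs
        rw [← hχconj s hs g hg, ← map_smul, ← (hW x).1 hx _ hs', ← hmul, ← hmul]
        congr 2; group
      have hWne : W ≠ ⊥ := (Submodule.ne_bot_iff _).2 ⟨v, hvW, hv⟩
      have hcomm : ∀ a ∈ commSet k (Set.univ : Set G), ∀ b ∈ commSet k (Set.univ : Set G),
          ∀ x ∈ W, σ a (σ b x) = σ b (σ a x) := by
        intro a ha b hb x hx
        have hab : ∀ b ∈ commSet k (Set.univ : Set G),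
            a * b * a⁻¹ * b⁻¹ ∈ commSet (k + 1) (Set.univ : Set G) :=
          fun b hb => ⟨a, ha, b, hb, rfl⟩
        have hsw : ∀ b ∈ commSet k (Set.univ : Set G), ∀ x ∈ W,
            σ a (σ b x) = χ (a * b * a⁻¹ * b⁻¹) • σ b (σ a x) := by
          intro b hb x hx
          rw [← (hW _).1 (hWinv b hb _ (hWinv a ha x hx)) _ (hab b hb), ← hmul, ← hmul, ← hmul]
          congr 2; group
        have : Nontrivial W := Submodule.nontrivial_iff_ne_bot.2 hWne
        obtain ⟨μ, hμ⟩ := Module.End.exists_eigenvalue ((σ a).restrict (hWinv a ha))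
        obtain ⟨y, hy⟩ := hμ.exists_hasEigenvector
        have hy1 : σ a y = μ • (y : Fin d → ℂ) := congrArg Subtype.val hy.apply_eq_smul
        have hy0 : (y : Fin d → ℂ) ≠ 0 := by simpa using hy.2
        have hinj : ∀ (g : G) z, z ≠ 0 → σ g z ≠ 0 := by
          intro g z hz h
          apply hz
          rw [← hone z, ← inv_mul_cancel g, hmul, h, map_zero]
        have hμ0 : μ ≠ 0 := by
          rintro rfl
          exact hinj a _ hy0 (by rw [hy1, zero_smul])
        obtain ⟨F, hF⟩ := hfin a
        have h1 := hscal k (fun b => a * b * a⁻¹ * b⁻¹) (fun f hf => by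
            simpa [mul_assoc] using hc _ (hl f hf a) a⁻¹) v hv
          (fun b => χ (a * b * a⁻¹ * b⁻¹)) (fun b hb => hχ _ (hab b hb))
          (F.image fun ν => ν / μ) (fun b hb => by
            refine Finset.mem_image.2 ⟨χ (a * b * a⁻¹ * b⁻¹) * μ, ?_, by field_simp⟩
            refine hF _ (σ b y) (hinj b _ hy0) ?_
            rw [hsw b hb _ y.2, hy1, map_smul, smul_smul]) b hb
        have h2 : χ (1 : G) = 1 := by
          have := hχ 1 (commSet_one_mem _)
          rw [hone] at this
          have h3 : (χ 1 - 1) • v = 0 := by rw [sub_smul, ← this, one_smul, sub_self]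
          exact sub_eq_zero.1 ((smul_eq_zero.1 h3).resolve_right hv)
        have h3 : χ (a * b * a⁻¹ * b⁻¹) = 1 := by simpa [h2] using h1
        rw [hsw b hb x hx, h3, one_smul]
      obtain ⟨x, _, hx0, hx⟩ := exists_common_eigen (σ '' commSet k (Set.univ : Set G)) _ W rfl hWne
        (by rintro _ ⟨g, hg, rfl⟩; exact hWinv g hg)
        (by rintro _ ⟨g, hg, rfl⟩ _ ⟨h, hh, rfl⟩; exact hcomm g hg h hh)
      exact ⟨x, hx0, fun g hg => hx _ ⟨g, hg, rfl⟩⟩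
  obtain ⟨v, hv, h⟩ := main n le_rfl
  rw [Nat.sub_self] at h
  exact ⟨v, hv, fun g => h g trivial⟩

/-- The group of units underlying a linear algebraic group. -/
def LinAlgGroup.toSubgroup {N : ℕ} (B : LinAlgGroup N) :
    Subgroup (Matrix (Fin N) (Fin N) ℂ)ˣ where
  carrier := {u | (u : Matrix (Fin N) (Fin N) ℂ) ∈ B.carrier}
  one_mem' := B.one_mem
  mul_mem' := fun {a b} ha hb => by
    simpa using B.mul_mem _ ha _ hb
  inv_mem' := fun {a} ha => by
    simpa using B.inv_mem _ ha

/-- matrix of an element -/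
def LinAlgGroup.mat {N : ℕ} (B : LinAlgGroup N) (g : B.toSubgroup) :
    Matrix (Fin N) (Fin N) ℂ := ((g : (Matrix (Fin N) (Fin N) ℂ)ˣ) : Matrix (Fin N) (Fin N) ℂ)

theorem LinAlgGroup.mat_mem {N : ℕ} (B : LinAlgGroup N) (g : B.toSubgroup) :
    B.mat g ∈ B.carrier := g.2

theorem LinAlgGroup.mat_mul {N : ℕ} (B : LinAlgGroup N) (g h : B.toSubgroup) :
    B.mat (g * h) = B.mat g * B.mat h := rfl

theorem LinAlgGroup.mat_one {N : ℕ} (B : LinAlgGroup N) :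
    B.mat 1 = 1 := rfl

theorem LinAlgGroup.mat_inv {N : ℕ} (B : LinAlgGroup N) (g : B.toSubgroup) :
    B.mat g⁻¹ = (B.mat g)⁻¹ := by
  simp [LinAlgGroup.mat]

theorem LinAlgGroup.det_ne {N : ℕ} (B : LinAlgGroup N) (g : B.toSubgroup) :
    (B.mat g).det ≠ 0 :=
  ((Matrix.isUnit_iff_isUnit_det _).1 (B.unit _ (B.mat_mem g))).ne_zero

theorem LinAlgGroup.exists_mat {N : ℕ} (B : LinAlgGroup N) (A : Matrix (Fin N) (Fin N) ℂ)
    (hA : A ∈ B.carrier) : ∃ g, B.mat g = A := by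
  obtain ⟨u, rfl⟩ := B.unit A hA
  exact ⟨⟨u, hA⟩, rfl⟩

/-- Regular functions. -/
def LinAlgGroup.reg {N : ℕ} (B : LinAlgGroup N) : Subalgebra ℂ (B.toSubgroup → ℂ) :=
  Algebra.adjoin ℂ ({f | ∃ i j, f = fun g => B.mat g i j} ∪
    {f | ∃ i j, f = fun g => B.mat g⁻¹ i j})

theorem LinAlgGroup.reg_mat {N : ℕ} (B : LinAlgGroup N) (i j : Fin N) :
    (fun g => B.mat g i j) ∈ B.reg := Algebra.subset_adjoin (Or.inl ⟨i, j, rfl⟩)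

theorem LinAlgGroup.reg_inv {N : ℕ} (B : LinAlgGroup N) (i j : Fin N) :
    (fun g => B.mat g⁻¹ i j) ∈ B.reg := Algebra.subset_adjoin (Or.inr ⟨i, j, rfl⟩)

theorem LinAlgGroup.reg_comp {N : ℕ} (B : LinAlgGroup N) (φ : B.toSubgroup → B.toSubgroup)
    (h1 : ∀ i j, (fun g => B.mat (φ g) i j) ∈ B.reg)
    (h2 : ∀ i j, (fun g => B.mat (φ g)⁻¹ i j) ∈ B.reg) :
    ∀ f ∈ B.reg, (fun g => f (φ g)) ∈ B.reg := by
  intro f hf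
  induction hf using Algebra.adjoin_induction with
  | mem f hf =>
    rcases hf with ⟨i, j, rfl⟩ | ⟨i, j, rfl⟩
    · exact h1 i j
    · exact h2 i j
  | algebraMap r => exact B.reg.algebraMap_mem r
  | add f g _ _ h h' => exact B.reg.add_mem h h'
  | mul f g _ _ h h' => exact B.reg.mul_mem h h'

/-- Matrices with regular entries are closed under products. -/
theorem LinAlgGroup.reg_mul {N : ℕ} (B : LinAlgGroup N)
    (P Q : B.toSubgroup → Matrix (Fin N) (Fin N) ℂ)
    (h1 : ∀ i j, (fun g => P g i j) ∈ B.reg) (h2 : ∀ i j, (fun g => Q g i j) ∈ B.reg)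
    (i j : Fin N) : (fun g => (P g * Q g) i j) ∈ B.reg := by
  have : (fun g => (P g * Q g) i j) = ∑ k, (fun g => P g i k) * (fun g => Q g k j) := by
    funext g; simp [Matrix.mul_apply, Finset.sum_apply]
  rw [this]
  exact B.reg.sum_mem fun k _ => B.reg.mul_mem (h1 i k) (h2 k j)

theorem LinAlgGroup.reg_const {N : ℕ} (B : LinAlgGroup N) (c : ℂ) :
    (fun _ => c) ∈ B.reg := B.reg.algebraMap_mem c

theorem LinAlgGroup.reg_det {N : ℕ} (B : LinAlgGroup N)
    (P : B.toSubgroup → Matrix (Fin N) (Fin N) ℂ)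
    (h1 : ∀ i j, (fun g => P g i j) ∈ B.reg) : (fun g => (P g).det) ∈ B.reg := by
  have : (fun g => (P g).det) = ∑ s : Equiv.Perm (Fin N),
      (fun _ => ((Equiv.Perm.sign s : ℤ) : ℂ)) * ∏ i, (fun g => P g (s i) i) := by
    funext g; simp [Matrix.det_apply', Finset.sum_apply, Finset.prod_apply]
  rw [this]
  exact B.reg.sum_mem fun k _ => B.reg.mul_mem (B.reg_const _) (B.reg.prod_mem fun i _ => h1 _ _)

theorem LinAlgGroup.reg_eval {N : ℕ} (B : LinAlgGroup N) (p : MvPolynomial (Fin N × Fin N) ℂ) :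
    (fun g => MvPolynomial.eval (fun ij => B.mat g ij.1 ij.2) p) ∈ B.reg := by
  induction p using MvPolynomial.induction_on with
  | C a => simpa using B.reg_const a
  | add p q hp hq => simp only [map_add]; exact B.reg.add_mem hp hq
  | mul_X p i hp => simp only [map_mul, MvPolynomial.eval_X]; exact B.reg.mul_mem hp (B.reg_mat i.1 i.2)

theorem LinAlgGroup.reg_poly {N : ℕ} (B : LinAlgGroup N) (f : B.toSubgroup → ℂ)
    (hf : f ∈ B.reg) : ∃ (k : ℕ) (p : MvPolynomial (Fin N × Fin N) ℂ), ∀ g,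
      f g * (B.mat g).det ^ k = MvPolynomial.eval (fun ij => B.mat g ij.1 ij.2) p := by
  have hX : ∀ g, (MvPolynomial.eval (fun ij => B.mat g ij.1 ij.2)).mapMatrix
      (Matrix.mvPolynomialX (Fin N) (Fin N) ℂ) = B.mat g := by
    intro g; ext i j; simp
  have hdet : ∀ g, MvPolynomial.eval (fun ij => B.mat g ij.1 ij.2)
      (Matrix.mvPolynomialX (Fin N) (Fin N) ℂ).det = (B.mat g).det := by
    intro g; rw [RingHom.map_det, hX]
  induction hf using Algebra.adjoin_induction with
  | mem f hf =>
    rcases hf with ⟨i, j, rfl⟩ | ⟨i, j, rfl⟩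
    · exact ⟨0, MvPolynomial.X (i, j), fun g => by simp⟩
    · refine ⟨1, (Matrix.mvPolynomialX (Fin N) (Fin N) ℂ).adjugate i j, fun g => ?_⟩
      have h1 : MvPolynomial.eval (fun ij => B.mat g ij.1 ij.2)
          ((Matrix.mvPolynomialX (Fin N) (Fin N) ℂ).adjugate i j) = (B.mat g).adjugate i j := by
        have := RingHom.map_adjugate (MvPolynomial.eval (fun ij => B.mat g ij.1 ij.2))
          (Matrix.mvPolynomialX (Fin N) (Fin N) ℂ)
        rw [hX] at this
        rw [← this]; rfl
      change B.mat g⁻¹ i j * _ = _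
      rw [h1, B.mat_inv, Matrix.inv_def, Ring.inverse_eq_inv']
      have := B.det_ne g
      simp only [Matrix.smul_apply, smul_eq_mul, pow_one]
      field_simp
  | algebraMap r => exact ⟨0, MvPolynomial.C r, fun g => by simp⟩
  | add f g _ _ h h' =>
    obtain ⟨k, p, hp⟩ := h
    obtain ⟨l, q, hq⟩ := h'
    refine ⟨k + l, p * (Matrix.mvPolynomialX (Fin N) (Fin N) ℂ).det ^ l +
      q * (Matrix.mvPolynomialX (Fin N) (Fin N) ℂ).det ^ k, fun x => ?_⟩
    rw [map_add, map_mul, map_mul, map_pow, map_pow, hdet, ← hp, ← hq, Pi.add_apply]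
    ring
  | mul f g _ _ h h' =>
    obtain ⟨k, p, hp⟩ := h
    obtain ⟨l, q, hq⟩ := h'
    refine ⟨k + l, p * q, fun x => ?_⟩
    rw [map_mul, ← hp, ← hq, Pi.mul_apply]
    ring

theorem LinAlgGroup.reg_irred {N : ℕ} (B : LinAlgGroup N) (hB : IsZConnected B) :
    RIrred B.reg Set.univ := by
  intro f hf g hg h
  obtain ⟨k, p, hp⟩ := B.reg_poly f hf
  obtain ⟨l, q, hq⟩ := B.reg_poly g hg
  refine (hB p q ?_).imp ?_ ?_
  · intro A hA
    obtain ⟨x, rfl⟩ := B.exists_mat A hA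
    rw [← hp, ← hq]
    have := h x trivial
    linear_combination ((B.mat x).det ^ k * (B.mat x).det ^ l) * this
  · intro h x _
    have := h _ (B.mat_mem x)
    rw [← hp] at this
    exact (mul_eq_zero.1 this).resolve_right (pow_ne_zero _ (B.det_ne x))
  · intro h x _
    have := h _ (B.mat_mem x)
    rw [← hq] at this
    exact (mul_eq_zero.1 this).resolve_right (pow_ne_zero _ (B.det_ne x))

theorem LinAlgGroup.commSet_mat {N : ℕ} (B : LinAlgGroup N) (k : ℕ) :
    ∀ g ∈ commSet k (Set.univ : Set B.toSubgroup), B.mat g ∈ commSet k B.carrier := by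
  induction k with
  | zero => intro g _; exact B.mat_mem g
  | succ k ih =>
    rintro _ ⟨a, ha, b, hb, rfl⟩
    exact ⟨_, ih a ha, _, ih b hb, by simp only [B.mat_mul, B.mat_inv]⟩

/-- A connected solvable group has an eigen-covector in every rational representation. -/
theorem exists_eigen_covector {N d : ℕ} (hd : 0 < d) (L B : LinAlgGroup N)
    (hBL : B.carrier ⊆ L.carrier) (hconn : IsZConnected B) (hsol : IsSolvSet B.carrier)
    (ρ : RationalRep L d) :
    ∃ f : Fin d → ℂ, f ≠ 0 ∧ ∀ A ∈ B.carrier, ∃ c : ℂˣ,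
      Matrix.vecMul f (ρ.ρ A) = (c : ℂ) • f := by
  obtain ⟨n, hn⟩ := hsol
  have hLmem : ∀ g, B.mat g ∈ L.carrier := fun g => hBL (B.mat_mem g)
  let σ : B.toSubgroup →* Module.End ℂ (Fin d → ℂ) :=
    { toFun := fun g => Matrix.vecMulLinear (ρ.ρ (B.mat g⁻¹))
      map_one' := by
        refine LinearMap.ext fun v => ?_
        simp [B.mat_one, ρ.map_one]
      map_mul' := fun g h => by
        refine LinearMap.ext fun v => ?_
        simp only [mul_inv_rev, B.mat_mul, ρ.map_mul _ (hLmem _) _ (hLmem _),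
          Matrix.vecMulLinear_apply, Module.End.mul_apply, Matrix.vecMul_vecMul] }
  have hσa : ∀ g v, σ g v = Matrix.vecMul v (ρ.ρ (B.mat g⁻¹)) := fun g v => rfl
  have hi : ∀ f ∈ B.reg, (fun g => f g⁻¹) ∈ B.reg :=
    B.reg_comp (fun g => g⁻¹) B.reg_inv (by simpa using B.reg_mat)
  have hρ : ∀ i j, (fun g => ρ.ρ (B.mat g) i j) ∈ B.reg := by
    intro i j
    obtain ⟨k, p, hp⟩ := ρ.rational i j
    have : (fun g => ρ.ρ (B.mat g) i j) =
        (fun g => MvPolynomial.eval (fun ij => B.mat g ij.1 ij.2) p) *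
          (fun g => (B.mat g⁻¹).det) ^ k := by
      funext g
      have h0 := B.det_ne g
      simp only [Pi.mul_apply, Pi.pow_apply]
      rw [← hp _ (hLmem g), B.mat_inv, Matrix.det_nonsing_inv, Ring.inverse_eq_inv', mul_assoc,
        ← mul_pow, mul_inv_cancel₀ h0, one_pow, mul_one]
    rw [this]
    exact B.reg.mul_mem (B.reg_eval p) (B.reg.pow_mem (B.reg_det _ B.reg_inv) k)
  obtain ⟨f, hf, h⟩ := lieKolchin (R := B.reg)
    (fun f hf c => B.reg_comp (fun g => g * c * g⁻¹)
      (B.reg_mul _ _ (B.reg_mul _ _ B.reg_mat fun i j => B.reg_const _) B.reg_inv)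
      (by
        have := (B.reg_mul _ _ (B.reg_mul _ _ B.reg_mat fun i j => B.reg_const (B.mat c⁻¹ i j))
          B.reg_inv)
        simp only [mul_inv_rev, inv_inv, ← mul_assoc]
        exact this) f hf)
    (fun f hf c => B.reg_comp (fun g => c * g)
      (B.reg_mul _ _ (fun i j => B.reg_const _) B.reg_mat)
      (by
        have := (B.reg_mul _ _ B.reg_inv fun i j => B.reg_const (B.mat c⁻¹ i j))
        simp only [mul_inv_rev]
        exact this) f hf)
    (fun f hf c => B.reg_comp (fun g => g * c)
      (B.reg_mul _ _ B.reg_mat (fun i j => B.reg_const _))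
      (by
        have := (B.reg_mul _ _ (fun i j => B.reg_const (B.mat c⁻¹ i j)) B.reg_inv)
        simp only [mul_inv_rev]
        exact this) f hf)
    hi (B.reg_irred hconn) n
    (by
      intro g hg
      have h1 : B.mat g = 1 := hn (B.commSet_mat n g hg)
      exact Subtype.ext (Units.ext h1))
    hd σ (by
      intro v i
      have : (fun g => σ g v i) = ∑ j, (fun _ => v j) * (fun g => ρ.ρ (B.mat g⁻¹) j i) := by
        funext g
        simp [hσa, Matrix.vecMul, dotProduct, Finset.sum_apply]
      rw [this]
      exact B.reg.sum_mem fun j _ => B.reg.mul_mem (B.reg_const _) (hi _ (hρ j i)))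
  refine ⟨f, hf, fun A hA => ?_⟩
  obtain ⟨g, rfl⟩ := B.exists_mat A hA
  obtain ⟨c, hc⟩ := h g⁻¹
  rw [hσa, inv_inv] at hc
  refine ⟨Units.mk0 c ?_, hc⟩
  rintro rfl
  rw [zero_smul] at hc
  apply hf
  have hu := ρ.unit _ (hLmem g)
  exact Matrix.vecMul_injective_iff_isUnit.2 hu (by simpa using hc)

/-- Lemma 5.7: Let `L` be connected reductive and `U₁ ≠ 0`, `U₂ ≠ 0`, `U₃`
rational `L`-modules.  If a Borel subgroup of `L × (ℂ*)²` (a product `B × (ℂ*)²` with `B`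
a Borel subgroup of `L`, the two `ℂ*`-factors acting by scalars on `U₁ ⊗ U₂` and `U₃`)
has a dense orbit in `(U₁ ⊗ U₂) ⊕ U₃`, then a Borel subgroup of `L × (ℂ*)³` (the three
`ℂ*`-factors acting by scalars on `U₁`, `U₂`, `U₃`) has a dense orbit in `U₁ ⊕ U₂ ⊕ U₃`. -/
theorem stmt19 {N d₁ d₂ d₃ : ℕ} (hd₁ : 0 < d₁) (hd₂ : 0 < d₂)
    (L : LinAlgGroup N) (hconn : IsZConnected L) (hred : IsReductive L)
    (ρ₁ : RationalRep L d₁) (ρ₂ : RationalRep L d₂) (ρ₃ : RationalRep L d₃)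
    (hyp : ∃ B : LinAlgGroup N, IsBorel L B ∧
      ∃ (w : Fin d₁ × Fin d₂ → ℂ) (u₃ : Fin d₃ → ℂ),
        ZDense {x : (Fin d₁ × Fin d₂) ⊕ Fin d₃ → ℂ |
          ∃ A ∈ B.carrier, ∃ s t : ℂˣ,
            x = Sum.elim
              (fun pq => (s : ℂ) *
                (Matrix.of fun p q : Fin d₁ × Fin d₂ =>
                  ρ₁.ρ A p.1 q.1 * ρ₂.ρ A p.2 q.2).mulVec w pq)
              (fun i => (t : ℂ) * (ρ₃.ρ A).mulVec u₃ i)}) :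
    ∃ B : LinAlgGroup N, IsBorel L B ∧
      ∃ (u₁ : Fin d₁ → ℂ) (u₂ : Fin d₂ → ℂ) (u₃ : Fin d₃ → ℂ),
        ZDense {x : Fin d₁ ⊕ Fin d₂ ⊕ Fin d₃ → ℂ |
          ∃ A ∈ B.carrier, ∃ s t r : ℂˣ,
            x = Sum.elim (fun i => (s : ℂ) * (ρ₁.ρ A).mulVec u₁ i)
                  (Sum.elim (fun j => (t : ℂ) * (ρ₂.ρ A).mulVec u₂ j)
                    (fun k => (r : ℂ) * (ρ₃.ρ A).mulVec u₃ k))} := by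
  obtain ⟨B, hB, w, u₃, hw⟩ := hyp
  obtain ⟨f₁, hf₁, h₁⟩ := exists_eigen_covector hd₁ L B hB.1 hB.2.1 hB.2.2.1 ρ₁
  obtain ⟨f₂, hf₂, h₂⟩ := exists_eigen_covector hd₂ L B hB.1 hB.2.1 hB.2.2.1 ρ₂
  refine ⟨B, hB, fun i => ∑ j, w (i, j) * f₂ j, fun j => ∑ i, f₁ i * w (i, j), u₃, ?_⟩
  intro p hp
  -- the key vanishing
  have key : ∀ (s t : ℂˣ) (x : (Fin d₁ × Fin d₂) ⊕ Fin d₃ → ℂ),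
      MvPolynomial.eval (Sum.elim (fun i => (s : ℂ) * ∑ j, x (Sum.inl (i, j)) * f₂ j)
        (Sum.elim (fun j => (t : ℂ) * ∑ i, f₁ i * x (Sum.inl (i, j)))
          (fun k => x (Sum.inr k)))) p = 0 := by
    intro s t
    let φ : Fin d₁ ⊕ Fin d₂ ⊕ Fin d₃ → MvPolynomial ((Fin d₁ × Fin d₂) ⊕ Fin d₃) ℂ :=
      Sum.elim (fun i => MvPolynomial.C (s : ℂ) *
          ∑ j, MvPolynomial.X (Sum.inl (i, j)) * MvPolynomial.C (f₂ j))
        (Sum.elim (fun j => MvPolynomial.C (t : ℂ) *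
          ∑ i, MvPolynomial.C (f₁ i) * MvPolynomial.X (Sum.inl (i, j)))
          (fun k => MvPolynomial.X (Sum.inr k)))
    have hφ : ∀ x : (Fin d₁ × Fin d₂) ⊕ Fin d₃ → ℂ, MvPolynomial.eval x (MvPolynomial.bind₁ φ p) =
        MvPolynomial.eval (Sum.elim (fun i => (s : ℂ) * ∑ j, x (Sum.inl (i, j)) * f₂ j)
        (Sum.elim (fun j => (t : ℂ) * ∑ i, f₁ i * x (Sum.inl (i, j)))
          (fun k => x (Sum.inr k)))) p := by
      intro x
      have e : (Sum.elim (fun i => (s : ℂ) * ∑ j, x (Sum.inl (i, j)) * f₂ j)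
        (Sum.elim (fun j => (t : ℂ) * ∑ i, f₁ i * x (Sum.inl (i, j)))
          (fun k => x (Sum.inr k)))) = fun m => MvPolynomial.eval x (φ m) := by
        funext m
        rcases m with i | j | k <;> simp [φ]
      rw [e]
      simp only [MvPolynomial.eval, MvPolynomial.eval₂Hom_bind₁]
    have hz : MvPolynomial.bind₁ φ p = 0 := by
      apply hw
      rintro x ⟨A, hA, s', t', rfl⟩
      rw [hφ]
      apply hp
      obtain ⟨c₁, hc₁⟩ := h₁ A hA
      obtain ⟨c₂, hc₂⟩ := h₂ A hA
      refine ⟨A, hA, s * s' * c₂, t * s' * c₁, t', ?_⟩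
      have e₁ : ∀ i, ∑ j, f₁ j * ρ₁.ρ A j i = c₁ * f₁ i := fun i => congrFun hc₁ i
      have e₂ : ∀ i, ∑ j, f₂ j * ρ₂.ρ A j i = c₂ * f₂ i := fun i => congrFun hc₂ i
      funext m
      rcases m with i | j | k
      · simp only [Sum.elim_inl, Units.val_mul, Matrix.mulVec, dotProduct, Matrix.of_apply,
          Fintype.sum_prod_type]
        have : ∀ a b, ρ₁.ρ A i a * (w (a, b) * (c₂ * f₂ b)) =
            ∑ j, (ρ₁.ρ A i a * ρ₂.ρ A j b * w (a, b)) * f₂ j := by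
          intro a b
          rw [← e₂ b, Finset.mul_sum, Finset.mul_sum]
          exact Finset.sum_congr rfl fun _ _ => by ring
        calc _ = (s : ℂ) * s' * ∑ j, ∑ a, ∑ b,
              (ρ₁.ρ A i a * ρ₂.ρ A j b * w (a, b)) * f₂ j := by
              simp only [Finset.mul_sum, Finset.sum_mul]
              refine Finset.sum_congr rfl fun _ _ => Finset.sum_congr rfl fun _ _ =>
                Finset.sum_congr rfl fun _ _ => by ring
          _ = (s : ℂ) * s' * ∑ a, ∑ b, ∑ j,
              (ρ₁.ρ A i a * ρ₂.ρ A j b * w (a, b)) * f₂ j := by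
              congr 1
              rw [Finset.sum_comm]
              exact Finset.sum_congr rfl fun _ _ => Finset.sum_comm
          _ = _ := by
              simp only [← this]
              simp only [Finset.mul_sum]
              refine Finset.sum_congr rfl fun _ _ => Finset.sum_congr rfl fun _ _ => by ring
      · simp only [Sum.elim_inl, Sum.elim_inr, Units.val_mul, Matrix.mulVec, dotProduct,
          Matrix.of_apply, Fintype.sum_prod_type]
        have : ∀ a b, ρ₂.ρ A j b * (w (a, b) * (c₁ * f₁ a)) =
            ∑ i, (ρ₁.ρ A i a * ρ₂.ρ A j b * w (a, b)) * f₁ i := by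
          intro a b
          rw [← e₁ a, Finset.mul_sum, Finset.mul_sum]
          exact Finset.sum_congr rfl fun _ _ => by ring
        calc _ = (t : ℂ) * s' * ∑ i, ∑ a, ∑ b,
              (ρ₁.ρ A i a * ρ₂.ρ A j b * w (a, b)) * f₁ i := by
              simp only [Finset.mul_sum]
              refine Finset.sum_congr rfl fun _ _ => Finset.sum_congr rfl fun _ _ =>
                Finset.sum_congr rfl fun _ _ => by ring
          _ = (t : ℂ) * s' * ∑ b, ∑ a, ∑ i,
              (ρ₁.ρ A i a * ρ₂.ρ A j b * w (a, b)) * f₁ i := by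
              congr 1
              rw [Finset.sum_comm, Finset.sum_comm (γ := Fin d₂)]
              refine Finset.sum_congr rfl fun _ _ => Finset.sum_comm
          _ = _ := by
              simp only [← this]
              simp only [Finset.mul_sum]
              refine Finset.sum_congr rfl fun _ _ => Finset.sum_congr rfl fun _ _ => by ring
      · rfl
    intro x
    rw [← hφ, hz, map_zero]
  -- the two linear forms
  let ℓ₁ : MvPolynomial (Fin d₁ ⊕ Fin d₂ ⊕ Fin d₃) ℂ :=
    ∑ i, MvPolynomial.C (f₁ i) * MvPolynomial.X (Sum.inl i)
  let ℓ₂ : MvPolynomial (Fin d₁ ⊕ Fin d₂ ⊕ Fin d₃) ℂ :=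
    ∑ j, MvPolynomial.X (Sum.inr (Sum.inl j)) * MvPolynomial.C (f₂ j)
  have hℓ₁ : ∀ x, MvPolynomial.eval x ℓ₁ = ∑ i, f₁ i * x (Sum.inl i) := by
    intro x; simp [ℓ₁]
  have hℓ₂ : ∀ x, MvPolynomial.eval x ℓ₂ = ∑ j, x (Sum.inr (Sum.inl j)) * f₂ j := by
    intro x; simp [ℓ₂]
  have hn₁ : ℓ₁ ≠ 0 := by
    intro h
    obtain ⟨i, hi⟩ := Function.ne_iff.1 hf₁
    apply hi
    have := hℓ₁ (Pi.single (Sum.inl i) 1)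
    simpa [h, Pi.single_apply] using this.symm
  have hn₂ : ℓ₂ ≠ 0 := by
    intro h
    obtain ⟨i, hi⟩ := Function.ne_iff.1 hf₂
    apply hi
    have := hℓ₂ (Pi.single (Sum.inr (Sum.inl i)) 1)
    simpa [h, Pi.single_apply] using this.symm
  have hprod : p * (ℓ₁ * ℓ₂) = 0 := by
    apply MvPolynomial.funext
    intro x
    rw [map_mul, map_mul, map_zero]
    by_cases hx₁ : MvPolynomial.eval x ℓ₁ = 0
    · simp [hx₁]
    by_cases hx₂ : MvPolynomial.eval x ℓ₂ = 0
    · simp [hx₂]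
    have := key (Units.mk0 _ hx₂)⁻¹ (Units.mk0 _ hx₁)⁻¹
      (Sum.elim (fun ij => x (Sum.inl ij.1) * x (Sum.inr (Sum.inl ij.2)))
        (fun k => x (Sum.inr (Sum.inr k))))
    have e : (Sum.elim (fun i => (((Units.mk0 _ hx₂)⁻¹ : ℂˣ) : ℂ) * ∑ j,
          (x (Sum.inl i) * x (Sum.inr (Sum.inl j))) * f₂ j)
        (Sum.elim (fun j => (((Units.mk0 _ hx₁)⁻¹ : ℂˣ) : ℂ) * ∑ i,
          f₁ i * (x (Sum.inl i) * x (Sum.inr (Sum.inl j))))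
          (fun k => x (Sum.inr (Sum.inr k))))) = x := by
      funext m
      rcases m with i | j | k
      · simp only [Sum.elim_inl, Units.val_inv_eq_inv_val, Units.val_mk0, mul_assoc,
          ← Finset.mul_sum]
        rw [← hℓ₂]
        field_simp
      · simp only [Sum.elim_inl, Sum.elim_inr, Units.val_inv_eq_inv_val, Units.val_mk0,
          ← mul_assoc, ← Finset.sum_mul]
        rw [mul_assoc, ← hℓ₁]
        field_simp
      · rfl
    simp only [Sum.elim_inl, Sum.elim_inr] at this
    rw [e] at this
    rw [this, zero_mul]
  exact (mul_eq_zero.1 hprod).resolve_right (mul_ne_zero hn₁ hn₂)
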